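/- For every pair of integers (d, r) with d ≥ 4, d − r odd, and d/2 ≤ r ≤ 3(d−1)/4 (i.e. 2r ≥ d and 4r ≤ 3(d−1)), there exists a line arrangement A of d lines in the real projective plane which is maximal Tjurina of type (d, r). -/

import Mathlib

open Classical MvPolynomial

variable {K : Type*} [Field K] [CharZero K] {ℓ : ℕ}

/-- A (central) hyperplane arrangement: a finite set of nonzero linear forms,
pairwise non-proportional. -/
def IsArrangement (A : Finset (MvPolynomial (Fin ℓ) K)) : Prop :=
  (∀ α ∈ A, α ≠ 0 ∧ α.IsHomogeneous 1) ∧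
    ∀ α ∈ A, ∀ β ∈ A, α ≠ β → ∀ c : K, α ≠ c • β

/-- The arrangement is essential: the common zero set of its forms is `{0}`. -/
def IsEssential (A : Finset (MvPolynomial (Fin ℓ) K)) : Prop :=
  ∀ v : Fin ℓ → K, (∀ α ∈ A, eval v α = 0) → v = 0

/-- The defining polynomial `Q(A)`. -/
noncomputable def Qpoly (A : Finset (MvPolynomial (Fin ℓ) K)) : MvPolynomial (Fin ℓ) K :=
  ∏ α ∈ A, α

/-- Apply a derivation `θ = Σ θ_j ∂_j` to a polynomial. -/
noncomputable def applyDer (θ : Fin ℓ → MvPolynomial (Fin ℓ) K)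
    (f : MvPolynomial (Fin ℓ) K) : MvPolynomial (Fin ℓ) K :=
  ∑ j, θ j * pderiv j f

/-- The minimal degree of a Jacobian relation `r(A)`. -/
noncomputable def mdr (A : Finset (MvPolynomial (Fin ℓ) K)) : ℕ :=
  sInf {r | ∃ θ : Fin ℓ → MvPolynomial (Fin ℓ) K, θ ≠ 0 ∧
    (∀ j, (θ j).IsHomogeneous r) ∧ applyDer θ (Qpoly A) = 0}

/-- The number of elements `|A^H|` of the restriction of `A` to `H`:
the number of distinct subspaces `H ∩ ker α_L`, `L ∈ A \ {H}`. -/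
noncomputable def restCard (A : Finset (MvPolynomial (Fin ℓ) K))
    (H : MvPolynomial (Fin ℓ) K) : ℕ :=
  ((A.erase H).image fun L => {v : Fin ℓ → K | eval v H = 0 ∧ eval v L = 0}).card

/-- The number `n_j(A)` of intersection points of multiplicity `j` of a line
arrangement `A` in `P^2`. An intersection point is encoded (bijectively) by the set
of lines of `A` passing through it, which has at least two elements. -/
noncomputable def nPoints (A : Finset (MvPolynomial (Fin 3) K)) (j : ℕ) : ℕ :=
  Set.ncard {T : Finset (MvPolynomial (Fin 3) K) |
    ∃ v : Fin 3 → K, v ≠ 0 ∧ T = A.filter (fun α => eval v α = 0) ∧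
      2 ≤ T.card ∧ T.card = j}

/-- The maximal multiplicity `m(A)` of an intersection point of `A`. -/
noncomputable def maxMult (A : Finset (MvPolynomial (Fin 3) K)) : ℕ :=
  sSup {j | 2 ≤ j ∧ nPoints A j ≠ 0}

/-- The global Tjurina number `τ(A) = Σ_{j ≥ 2} n_j(A)·(j−1)²` of a line arrangement. -/
noncomputable def tjurina (A : Finset (MvPolynomial (Fin 3) K)) : ℕ :=
  ∑ j ∈ Finset.range (A.card + 1), nPoints A j * (j - 1) ^ 2

/-- `τ(d,r)_max = (d−1)(d−r−1) + r² − C(2r−d+2, 2)`, for `d/2 ≤ r ≤ d−1`. -/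
def tauMax (d r : ℕ) : ℕ :=
  (d - 1) * (d - r - 1) + r ^ 2 - Nat.choose (2 * r - d + 2) 2

/-- A line arrangement `A` is maximal Tjurina of type `(d, r)` if it consists of `d`
lines, `r(A) = r` and `τ(A) = τ(d,r)_max`. -/
def IsMaxTjurina (A : Finset (MvPolynomial (Fin 3) K)) (d r : ℕ) : Prop :=
  A.card = d ∧ mdr A = r ∧ tjurina A = tauMax d r

/-- The linear form with coefficient vector `c`. -/
noncomputable def frm (c : Fin 3 → ℝ) : MvPolynomial (Fin 3) ℝ :=
  C (c 0) * X 0 + C (c 1) * X 1 + C (c 2) * X 2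

/-- Non-proportional coefficient vectors. -/
def NonProp (a b : Fin 3 → ℝ) : Prop :=
  a 0 * b 1 - a 1 * b 0 ≠ 0 ∨ a 0 * b 2 - a 2 * b 0 ≠ 0 ∨ a 1 * b 2 - a 2 * b 1 ≠ 0

/-- The determinant of three coefficient vectors. -/
def det3 (a b c : Fin 3 → ℝ) : ℝ :=
  a 0 * (b 1 * c 2 - b 2 * c 1) - a 1 * (b 0 * c 2 - b 2 * c 0) + a 2 * (b 0 * c 1 - b 1 * c 0)

/-- The value of the derivation `θ` on the linear form with coefficients `c`. -/
noncomputable def derv (c : Fin 3 → ℝ) (θ : Fin 3 → MvPolynomial (Fin 3) ℝ) :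
    MvPolynomial (Fin 3) ℝ :=
  C (c 0) * θ 0 + C (c 1) * θ 1 + C (c 2) * θ 2

lemma frm_hom (c : Fin 3 → ℝ) : (frm c).IsHomogeneous 1 :=
  ((isHomogeneous_C_mul_X _ _).add (isHomogeneous_C_mul_X _ _)).add (isHomogeneous_C_mul_X _ _)

lemma frm_eval (c v : Fin 3 → ℝ) : eval v (frm c) = c 0 * v 0 + c 1 * v 1 + c 2 * v 2 := by
  simp [frm]

lemma frm_ne_zero (c : Fin 3 → ℝ) (hc : c ≠ 0) : frm c ≠ 0 := by
  intro h
  apply hc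
  ext i
  have h0 := congrArg (eval (Pi.single i (1 : ℝ))) h
  rw [frm_eval] at h0
  fin_cases i <;> simpa using h0

lemma NonProp.left_ne {a b : Fin 3 → ℝ} (h : NonProp a b) : a ≠ 0 := by
  rintro rfl; simp [NonProp] at h

lemma NonProp.right_ne {a b : Fin 3 → ℝ} (h : NonProp a b) : b ≠ 0 := by
  rintro rfl; simp [NonProp] at h

lemma NonProp.symm {a b : Fin 3 → ℝ} (h : NonProp a b) : NonProp b a := by
  unfold NonProp at *
  rcases h with h | h | h
  · left; intro h'; apply h; linarith
  · right; left; intro h'; apply h; linarith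
  · right; right; intro h'; apply h; linarith

lemma totalDegree_aeval_le' (s : Fin 3 → MvPolynomial (Fin 3) ℝ) (hs : ∀ i, (s i).IsHomogeneous 1)
    (p : MvPolynomial (Fin 3) ℝ) : (aeval s p).totalDegree ≤ p.totalDegree := by
  conv_lhs => rw [← sum_homogeneousComponent p, map_sum]
  apply totalDegree_finsetSum_le
  intro i hi
  have := (homogeneousComponent_isHomogeneous i p).aeval s hs
  have h2 := this.totalDegree_le
  simp at hi
  omega

/-- Elimination of the variable `x` using `x + β y + γ z = 0`. -/
noncomputable def elimX (β γ : ℝ) : MvPolynomial (Fin 3) ℝ →ₐ[ℝ] MvPolynomial (Fin 3) ℝ :=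
  aeval ![-(C β * X 1 + C γ * X 2), X 1, X 2]

lemma elimX_deg (β γ : ℝ) (p : MvPolynomial (Fin 3) ℝ) :
    (elimX β γ p).totalDegree ≤ p.totalDegree := by
  apply totalDegree_aeval_le'
  intro i
  fin_cases i
  · exact ((isHomogeneous_C_mul_X _ _).add (isHomogeneous_C_mul_X _ _)).neg
  · exact isHomogeneous_X _ _
  · exact isHomogeneous_X _ _

lemma elimX_X0 (β γ : ℝ) : elimX β γ (X 0) = -(C β * X 1 + C γ * X 2) := by simp [elimX]
lemma elimX_X1 (β γ : ℝ) : elimX β γ (X 1) = X 1 := by simp [elimX]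
lemma elimX_X2 (β γ : ℝ) : elimX β γ (X 2) = X 2 := by simp [elimX]
lemma elimX_C (β γ a : ℝ) : elimX β γ (C a) = C a := by simp [elimX, algebraMap_eq]

lemma elimX_dvd (c : Fin 3 → ℝ) (hc : c 0 = 1) (p : MvPolynomial (Fin 3) ℝ) :
    frm c ∣ p - elimX (c 1) (c 2) p := by
  induction p using MvPolynomial.induction_on with
  | C a => simp [elimX]
  | add p q hp hq =>
    rw [map_add, add_sub_add_comm]; exact dvd_add hp hq
  | mul_X p i hp =>
    have hX : frm c ∣ X i - elimX (c 1) (c 2) (X i) := by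
      fin_cases i
      · refine ⟨1, ?_⟩
        show X 0 - elimX _ _ (X 0) = _
        rw [elimX_X0]; simp [frm, hc]; ring
      · show _ ∣ X 1 - elimX _ _ (X 1)
        simp [elimX_X1]
      · show _ ∣ X 2 - elimX _ _ (X 2)
        simp [elimX_X2]
    have : p * X i - elimX (c 1) (c 2) (p * X i) = (p - elimX (c 1) (c 2) p) * X i
        + elimX (c 1) (c 2) p * (X i - elimX (c 1) (c 2) (X i)) := by
      rw [map_mul]; ring
    rw [this]
    exact dvd_add (hp.mul_right _) (hX.mul_left _)

lemma elimX_frm (c l : Fin 3 → ℝ) : elimX (c 1) (c 2) (frm l) =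
    C (l 1 - l 0 * c 1) * X 1 + C (l 2 - l 0 * c 2) * X 2 := by
  simp only [frm, map_add, map_mul, elimX_C, elimX_X0, elimX_X1, elimX_X2, map_sub]; ring

lemma elimX_self (c : Fin 3 → ℝ) (hc : c 0 = 1) : elimX (c 1) (c 2) (frm c) = 0 := by
  rw [elimX_frm, hc]; simp

/-- The binary linear form `a y + b z`. -/
noncomputable def bin (a b : ℝ) : MvPolynomial (Fin 3) ℝ := C a * X 1 + C b * X 2

lemma bin_hom (a b : ℝ) : (bin a b).IsHomogeneous 1 :=
  (isHomogeneous_C_mul_X _ _).add (isHomogeneous_C_mul_X _ _)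

lemma isUnit_C' {a : ℝ} (ha : a ≠ 0) : IsUnit (C a : MvPolynomial (Fin 3) ℝ) :=
  (isUnit_iff_ne_zero.mpr ha).map C

lemma bin_relPrime {a b a' b' : ℝ} (h : a * b' - a' * b ≠ 0) :
    IsRelPrime (bin a b) (bin a' b') := by
  intro p hp hp'
  have h1 : p ∣ C (a * b' - a' * b) * X 1 := by
    have : C (a * b' - a' * b) * X 1 = C b' * bin a b - C b * bin a' b' := by
      simp only [bin, map_sub, map_mul]; ring
    rw [this]; exact dvd_sub (hp.mul_left _) (hp'.mul_left _)
  have h2 : p ∣ C (a * b' - a' * b) * X 2 := by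
    have : C (a * b' - a' * b) * X 2 = C a * bin a' b' - C a' * bin a b := by
      simp only [bin, map_sub, map_mul]; ring
    rw [this]; exact dvd_sub (hp'.mul_left _) (hp.mul_left _)
  rw [(isUnit_C' h).dvd_mul_left] at h1 h2
  have hir : Irreducible (X 1 : MvPolynomial (Fin 3) ℝ) := X_prime.irreducible
  rcases (hir.dvd_iff).1 h1 with h | h
  · exact h
  · exfalso
    have := h.dvd.trans h2
    rw [X_dvd_X] at this
    revert this; decide

lemma bin_ne_zero {a b : ℝ} (h : a ≠ 0 ∨ b ≠ 0) : bin a b ≠ 0 := by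
  intro h0
  have h1 := congrArg (eval ![0, 1, 0]) h0
  have h2 := congrArg (eval ![0, 0, 1]) h0
  simp [bin] at h1 h2
  tauto

section generic

variable {ι : Type} (c : ι → Fin 3 → ℝ)

/-- All logarithmic derivations of degree `< r` are multiples of the Euler derivation. -/
def LowTriv (T : Finset ι) (r : ℕ) : Prop :=
  ∀ θ : Fin 3 → MvPolynomial (Fin 3) ℝ, (∀ i, (θ i).totalDegree < r) →
    (∀ L ∈ T, frm (c L) ∣ derv (c L) θ) → ∃ g, ∀ i, θ i = g * X i

lemma LowTriv.mono {T T' : Finset ι} {r : ℕ} (h : LowTriv c T r) (hT : T ⊆ T') :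
    LowTriv c T' r := fun θ h1 h2 => h θ h1 fun L hL => h2 L (hT hL)

lemma derv_euler (l : Fin 3 → ℝ) (g : MvPolynomial (Fin 3) ℝ) (θ : Fin 3 → MvPolynomial (Fin 3) ℝ) :
    derv l (fun i => θ i - g * X i) = derv l θ - g * frm l := by
  simp only [derv, frm]; ring

lemma frm_prime {b : Fin 3 → ℝ} (hb : b ≠ 0) : Prime (frm b) := by
  have hne := frm_ne_zero b hb
  have hdeg := (frm_hom b).totalDegree hne
  apply Irreducible.prime
  have hunit : ∀ p : MvPolynomial (Fin 3) ℝ, p ≠ 0 → p.totalDegree = 0 → IsUnit p := by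
    intro p hp h
    rw [totalDegree_eq_zero_iff_eq_C] at h
    rw [h]
    apply isUnit_C'
    intro h'
    rw [h', C_0] at h
    exact hp h
  constructor
  · intro h
    have := isUnit_iff_totalDegree_of_isReduced.1 h
    omega
  · intro p q hpq
    have hp : p ≠ 0 := by rintro rfl; simp [hne] at hpq
    have hq : q ≠ 0 := by rintro rfl; simp [hne] at hpq
    have := totalDegree_mul_of_isDomain hp hq
    rw [← hpq, hdeg] at this
    by_cases h : p.totalDegree = 0
    · exact Or.inl (hunit p hp h)
    · exact Or.inr (hunit q hq (by omega))

lemma frm_coeff (a b : Fin 3 → ℝ) (s : ℝ) (h : frm a = frm b * C s) (i : Fin 3) :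
    a i = b i * s := by
  have h0 := congrArg (eval (Pi.single i (1 : ℝ))) h
  rw [map_mul, frm_eval, frm_eval, eval_C] at h0
  fin_cases i <;> simpa using h0

lemma frm_not_dvd {a b : Fin 3 → ℝ} (h : NonProp a b) : ¬ frm b ∣ frm a := by
  rintro ⟨w, hw⟩
  have hb := frm_ne_zero b h.right_ne
  have ha := frm_ne_zero a h.left_ne
  have hw0 : w ≠ 0 := by rintro rfl; simp [ha] at hw
  have := totalDegree_mul_of_isDomain hb hw0
  rw [← hw, (frm_hom a).totalDegree ha, (frm_hom b).totalDegree hb] at this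
  have h0 : w.totalDegree = 0 := by omega
  rw [totalDegree_eq_zero_iff_eq_C] at h0
  rw [h0] at hw
  have hc := frm_coeff a b _ hw
  unfold NonProp at h
  rw [hc 0, hc 1, hc 2] at h
  rcases h with h | h | h <;> apply h <;> ring

lemma frm_relPrime {a b : Fin 3 → ℝ} (h : NonProp a b) {p : MvPolynomial (Fin 3) ℝ}
    (hd : frm b ∣ frm a * p) : frm b ∣ p :=
  ((frm_prime h.right_ne).dvd_or_dvd hd).resolve_left (frm_not_dvd h)

theorem LowTriv.add [DecidableEq ι] {γ : Type} [DecidableEq γ] {T : Finset ι} {H : ι} {r : ℕ} (hT : LowTriv c T r)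
    (hr : 1 ≤ r) (hH : c H 0 = 1)
    (hnp : ∀ L ∈ T, NonProp (c H) (c L)) (π : ι → γ)
    (hπ : ∀ L ∈ T, ∀ L' ∈ T, det3 (c H) (c L) (c L') = 0 → π L = π L')
    (hcard : r + 2 ≤ (T.image π).card) : LowTriv c (insert H T) (r + 1) := by
  intro θ hdeg hθ
  set ρ := elimX (c H 1) (c H 2) with hρ
  have hdiv : ∀ p, ρ p = 0 → frm (c H) ∣ p := by
    intro p hp
    have := elimX_dvd (c H) hH p
    rwa [← hρ, hp, sub_zero] at this
  have hdiv' : ∀ p, frm (c H) ∣ p → ρ p = 0 := by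
    rintro p ⟨w, rfl⟩
    rw [map_mul, hρ, elimX_self _ hH, zero_mul]
  have hρdeg : ∀ p, (ρ p).totalDegree ≤ p.totalDegree := elimX_deg _ _
  have h0 : ρ (θ 0) + C (c H 1) * ρ (θ 1) + C (c H 2) * ρ (θ 2) = 0 := by
    have := hdiv' _ (hθ H (Finset.mem_insert_self _ _))
    simpa [derv, hH, hρ, elimX_C] using this
  set q := X 1 * ρ (θ 2) - X 2 * ρ (θ 1) with hq
  have hqdeg : q.totalDegree ≤ r + 1 := by
    refine (totalDegree_sub _ _).trans (max_le ?_ ?_)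
    · refine (totalDegree_mul _ _).trans ?_
      have := hρdeg (θ 2)
      have := hdeg 2
      rw [totalDegree_X]; omega
    · refine (totalDegree_mul _ _).trans ?_
      have := hρdeg (θ 1)
      have := hdeg 1
      rw [totalDegree_X]; omega
  let B : ι → MvPolynomial (Fin 3) ℝ := fun L =>
    bin (c L 1 - c L 0 * c H 1) (c L 2 - c L 0 * c H 2)
  have hab : ∀ L ∈ T, c L 1 - c L 0 * c H 1 ≠ 0 ∨ c L 2 - c L 0 * c H 2 ≠ 0 := by
    intro L hL
    by_contra! hcon
    obtain ⟨e1, e2⟩ := hcon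
    have := hnp L hL
    unfold NonProp at this
    rw [hH] at this
    rcases this with h | h | h
    · apply h; linarith
    · apply h; linarith
    · apply h
      have e1' : c L 1 = c L 0 * c H 1 := by linarith
      have e2' : c L 2 = c L 0 * c H 2 := by linarith
      rw [e1', e2']; ring
  have hBq : ∀ L ∈ T, B L ∣ q := by
    intro L hL
    obtain ⟨w, hw⟩ := hθ L (Finset.mem_insert_of_mem hL)
    have hw' := congrArg ρ hw
    rw [map_mul, hρ, elimX_frm, ← hρ] at hw'
    have e : ρ (derv (c L) θ) = C (c L 1 - c L 0 * c H 1) * ρ (θ 1)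
        + C (c L 2 - c L 0 * c H 2) * ρ (θ 2) := by
      have e0 : ρ (θ 0) = -(C (c H 1) * ρ (θ 1) + C (c H 2) * ρ (θ 2)) := by
        linear_combination h0
      have : ρ (derv (c L) θ) = C (c L 0) * ρ (θ 0) + C (c L 1) * ρ (θ 1) + C (c L 2) * ρ (θ 2) := by
        simp only [derv, map_add, map_mul, hρ, elimX_C]
      rw [this, e0]; simp only [map_sub, map_mul]; ring
    rw [e] at hw'
    rcases hab L hL with h | h
    · rw [← (isUnit_C' h).dvd_mul_left]
      refine ⟨ρ (θ 2) - X 2 * ρ w, ?_⟩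
      simp only [B, bin, hq]
      linear_combination -X 2 * hw'
    · rw [← (isUnit_C' h).dvd_mul_left]
      refine ⟨X 1 * ρ w - ρ (θ 1), ?_⟩
      simp only [B, bin, hq]
      linear_combination X 1 * hw'
  have hq0 : q = 0 := by
    by_contra hne
    have hrep : ∀ y ∈ T.image π, ∃ L, L ∈ T ∧ π L = y := by
      intro y hy; simpa using hy
    have : Nonempty ι := ⟨H⟩
    choose! s hs1 hs2 using hrep
    have hpd : (∏ y ∈ T.image π, B (s y)) ∣ q := by
      apply Finset.prod_dvd_of_isRelPrime
      · intro y hy y' hy' hyy'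
        apply bin_relPrime
        intro hz
        apply hyy'
        rw [← hs2 y hy, ← hs2 y' hy']
        apply hπ _ (hs1 y hy) _ (hs1 y' hy')
        unfold det3
        rw [hH]
        linear_combination hz
      · intro y hy; exact hBq _ (hs1 y hy)
    have hhom : (∏ y ∈ T.image π, B (s y)).IsHomogeneous (∑ y ∈ T.image π, 1) :=
      IsHomogeneous.prod _ _ _ fun y hy => bin_hom _ _
    have hne2 : (∏ y ∈ T.image π, B (s y)) ≠ 0 :=
      Finset.prod_ne_zero_iff.2 fun y hy => bin_ne_zero (hab _ (hs1 y hy))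
    have hdeg2 := hhom.totalDegree hne2
    obtain ⟨w, hw⟩ := hpd
    have hw0 : w ≠ 0 := by rintro rfl; apply hne; rw [hw, mul_zero]
    have := totalDegree_mul_of_isDomain hne2 hw0
    rw [← hw, hdeg2] at this
    simp at this
    omega
  have hX1 : (X 1 : MvPolynomial (Fin 3) ℝ) ∣ ρ (θ 1) := by
    have h1 : (X 1 : MvPolynomial (Fin 3) ℝ) ∣ X 2 * ρ (θ 1) :=
      ⟨ρ (θ 2), by linear_combination -hq0⟩
    rcases (X_prime (R := ℝ) (i := (1 : Fin 3))).dvd_or_dvd h1 with h | h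
    · rw [X_dvd_X] at h; exact absurd h (by decide)
    · exact h
  obtain ⟨g, hg⟩ := hX1
  have hX1ne : (X 1 : MvPolynomial (Fin 3) ℝ) ≠ 0 := X_ne_zero _
  have hg2 : ρ (θ 2) = X 2 * g := by
    apply mul_left_cancel₀ hX1ne
    rw [hq, hg] at hq0
    linear_combination hq0
  have hg0 : ρ (θ 0) = ρ (X 0) * g := by
    rw [hρ, elimX_X0, ← hρ]
    rw [hg, hg2] at h0
    linear_combination h0
  have hρg : ρ g = g := by
    have hidem : ∀ p, ρ (ρ p) = ρ p := by
      intro p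
      have := hdiv' _ (elimX_dvd (c H) hH p)
      rw [map_sub, sub_eq_zero] at this
      exact this.symm
    apply mul_left_cancel₀ hX1ne
    have := hidem (θ 1)
    rw [hg, map_mul, hρ, elimX_X1] at this
    exact this
  have hgdeg : g = 0 ∨ g.totalDegree + 1 ≤ r := by
    by_cases h : g = 0
    · exact Or.inl h
    · right
      have e1 := totalDegree_mul_of_isDomain hX1ne h
      rw [← hg, totalDegree_X] at e1
      have := hρdeg (θ 1)
      have := hdeg 1
      omega
  have hdd : ∀ i, frm (c H) ∣ θ i - g * X i := by
    intro i
    apply hdiv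
    rw [map_sub, map_mul, hρg, sub_eq_zero]
    fin_cases i
    · show ρ (θ 0) = g * ρ (X 0)
      rw [hg0, mul_comm]
    · show ρ (θ 1) = g * ρ (X 1)
      rw [hg, hρ, elimX_X1, mul_comm]
    · show ρ (θ 2) = g * ρ (X 2)
      rw [hg2, hρ, elimX_X2, mul_comm]
  choose η hη using hdd
  have hHne : frm (c H) ≠ 0 := by
    apply frm_ne_zero; intro h; rw [h] at hH; simp at hH
  have hηdeg : ∀ i, (η i).totalDegree < r := by
    intro i
    by_cases h : η i = 0
    · rw [h, totalDegree_zero]; omega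
    · have e1 := totalDegree_mul_of_isDomain hHne h
      rw [← hη i, (frm_hom _).totalDegree hHne] at e1
      have e2 : (θ i - g * X i).totalDegree ≤ r := by
        refine (totalDegree_sub _ _).trans (max_le ?_ ?_)
        · have := hdeg i; omega
        · rcases hgdeg with h | h
          · simp [h]
          · refine (totalDegree_mul _ _).trans ?_
            rw [totalDegree_X]; exact h
      omega
  obtain ⟨g', hg'⟩ := hT η hηdeg (by
    intro L hL
    apply frm_relPrime (hnp L hL)
    have : frm (c H) * derv (c L) η = derv (c L) θ - g * frm (c L) := by
      rw [← derv_euler, derv, derv]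
      simp only [hη]; ring
    rw [this]
    exact dvd_sub (hθ L (Finset.mem_insert_of_mem hL)) (Dvd.intro_left _ rfl))
  refine ⟨g + frm (c H) * g', fun i => ?_⟩
  have := hη i
  rw [hg' i] at this
  linear_combination this

end generic
lemma applyDer_mul (θ : Fin 3 → MvPolynomial (Fin 3) ℝ) (p q : MvPolynomial (Fin 3) ℝ) :
    applyDer θ (p * q) = applyDer θ p * q + p * applyDer θ q := by
  simp only [applyDer, Fin.sum_univ_three, Derivation.leibniz, smul_eq_mul]; ring

lemma applyDer_frm (θ : Fin 3 → MvPolynomial (Fin 3) ℝ) (l : Fin 3 → ℝ) :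
    applyDer θ (frm l) = derv l θ := by
  simp [applyDer, Fin.sum_univ_three, frm, derv, pderiv_X, Pi.single_apply]
  ring

section generic2

variable {ι : Type} [DecidableEq ι] (c : ι → Fin 3 → ℝ)

/-- The arrangement attached to a finite set of indices. -/
noncomputable def arr (T : Finset ι) : Finset (MvPolynomial (Fin 3) ℝ) :=
  T.image fun L => frm (c L)

variable {c}

lemma frm_inj (hc : ∀ L L', L ≠ L' → NonProp (c L) (c L')) :
    Function.Injective fun L => frm (c L) := by
  intro L L' h
  by_contra hne
  exact frm_not_dvd (hc L L' hne) (by rw [show frm (c L) = frm (c L') from h])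

lemma Qpoly_arr (hc : ∀ L L', L ≠ L' → NonProp (c L) (c L')) (T : Finset ι) :
    Qpoly (arr c T) = ∏ L ∈ T, frm (c L) := by
  unfold Qpoly arr
  convert Finset.prod_image (f := fun x => x) (s := T) ((frm_inj hc).injOn)

lemma prod_hom (T : Finset ι) : (∏ L ∈ T, frm (c L)).IsHomogeneous T.card := by
  have := IsHomogeneous.prod T (fun L => frm (c L)) (fun _ => 1) fun L _ => frm_hom _
  simpa using this

lemma log_of_syz (hc : ∀ L L', L ≠ L' → NonProp (c L) (c L')) (hn : ∀ L, c L ≠ 0) (T : Finset ι)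
    (θ : Fin 3 → MvPolynomial (Fin 3) ℝ) (h : applyDer θ (∏ L ∈ T, frm (c L)) = 0) :
    ∀ L ∈ T, frm (c L) ∣ derv (c L) θ := by
  intro L hL
  rw [← Finset.mul_prod_erase T _ hL, applyDer_mul, applyDer_frm] at h
  have h2 : frm (c L) ∣ derv (c L) θ * ∏ x ∈ T.erase L, frm (c x) :=
    ⟨-applyDer θ (∏ x ∈ T.erase L, frm (c x)), by linear_combination h⟩
  refine ((frm_prime (hn L)).dvd_or_dvd h2).resolve_right ?_
  intro h3
  obtain ⟨M, hM, h4⟩ := (Prime.dvd_finsetProd_iff (frm_prime (hn L)) _).1 h3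
  exact frm_not_dvd (hc M L (Finset.ne_of_mem_erase hM)) h4

theorem mdr_arr (hc : ∀ L L', L ≠ L' → NonProp (c L) (c L')) (hn : ∀ L, c L ≠ 0)
    (T V : Finset ι) (r : ℕ) (hr : 1 ≤ r) (hlow : LowTriv c T r)
    (hVT : V ⊆ T) (hV : ∀ L ∈ V, c L 1 = 0) (hcard : T.card = r + V.card) :
    mdr (arr c T) = r := by
  have hQne : (∏ L ∈ T, frm (c L)) ≠ 0 :=
    Finset.prod_ne_zero_iff.2 fun L _ => frm_ne_zero _ (hn L)
  have hd0 : (T.card : ℝ) ≠ 0 := by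
    have : T.card ≠ 0 := by omega
    exact_mod_cast this
  have heuler : ∑ i, X i * pderiv i (∏ L ∈ T, frm (c L)) = C (T.card : ℝ) * ∏ L ∈ T, frm (c L) := by
    rw [(prod_hom T).sum_X_mul_pderiv, nsmul_eq_mul]; simp
  have hmem : r ∈ {r | ∃ θ : Fin 3 → MvPolynomial (Fin 3) ℝ, θ ≠ 0 ∧
      (∀ j, (θ j).IsHomogeneous r) ∧ applyDer θ (Qpoly (arr c T)) = 0} := by
    set G := ∏ L ∈ T \ V, frm (c L) with hG
    have hGhom : G.IsHomogeneous r := by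
      have := prod_hom (c := c) (T \ V)
      rwa [Finset.card_sdiff_of_subset hVT, show T.card - V.card = r by omega] at this
    have hGne : G ≠ 0 := Finset.prod_ne_zero_iff.2 fun L _ => frm_ne_zero _ (hn L)
    have hsplit : ∏ L ∈ T, frm (c L) = G * ∏ L ∈ V, frm (c L) := by
      rw [hG, Finset.prod_sdiff hVT]
    have hdV : pderiv 1 (∏ L ∈ V, frm (c L)) = 0 := by
      have : ∀ W : Finset ι, W ⊆ V → pderiv 1 (∏ L ∈ W, frm (c L)) = 0 := by
        intro W
        induction W using Finset.induction_on with
        | empty => intro _; simp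
        | insert a s ha ih =>
          intro hW
          rw [Finset.prod_insert ha, Derivation.leibniz,
            ih ((Finset.subset_insert _ _).trans hW)]
          have : pderiv 1 (frm (c a)) = 0 := by
            simp [frm, pderiv_X, hV a (hW (Finset.mem_insert_self _ _))]
          rw [this]; simp
      exact this V subset_rfl
    set g : MvPolynomial (Fin 3) ℝ := C ((T.card : ℝ)⁻¹) * pderiv 1 G with hg
    have hghom : ∀ i, (g * X i : MvPolynomial (Fin 3) ℝ).IsHomogeneous r := by
      intro i
      have := ((hGhom.pderiv (i := 1)).C_mul (T.card : ℝ)⁻¹).mul (isHomogeneous_X ℝ i)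
      rwa [show r - 1 + 1 = r by omega] at this
    refine ⟨fun i => (if i = 1 then G else 0) - g * X i, ?_, ?_, ?_⟩
    · intro h
      have h0 := congrFun h 0
      have h1 := congrFun h 1
      simp at h0 h1
      simp [h0] at h1
      exact hGne h1
    · intro i
      refine IsHomogeneous.sub ?_ (hghom i)
      split_ifs
      · exact hGhom
      · exact isHomogeneous_zero _ _ _
    · rw [Qpoly_arr hc]
      have e1 : applyDer (fun i => (if i = 1 then G else 0) - g * X i) (∏ L ∈ T, frm (c L))
          = G * pderiv 1 (∏ L ∈ T, frm (c L))
            - g * ∑ i, X i * pderiv i (∏ L ∈ T, frm (c L)) := by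
        simp only [applyDer, Fin.sum_univ_three]
        simp
        ring
      rw [e1, heuler]
      have e2 : pderiv 1 (∏ L ∈ T, frm (c L)) = pderiv 1 G * ∏ L ∈ V, frm (c L) := by
        rw [hsplit, Derivation.leibniz, hdV]; simp [mul_comm]
      rw [e2, hsplit, hg]
      have e3 : (C (T.card : ℝ)⁻¹ * C (T.card : ℝ) : MvPolynomial (Fin 3) ℝ) = 1 := by
        rw [← C_mul, inv_mul_cancel₀ hd0, C_1]
      linear_combination (-(pderiv 1 G * G * ∏ L ∈ V, frm (c L))) * e3
  apply le_antisymm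
  · exact Nat.sInf_le hmem
  · apply le_csInf ⟨r, hmem⟩
    · rintro e ⟨θ, hθ0, hθhom, hθ⟩
      by_contra hlt
      push Not at hlt
      rw [Qpoly_arr hc] at hθ
      obtain ⟨g, hg⟩ := hlow θ (fun i => (hθhom i).totalDegree_le.trans_lt hlt)
        (log_of_syz hc hn T θ hθ)
      have e1 : applyDer θ (∏ L ∈ T, frm (c L)) = g * ∑ i, X i * pderiv i (∏ L ∈ T, frm (c L)) := by
        simp only [applyDer, hg, Finset.mul_sum, mul_assoc]
      rw [e1, heuler] at hθ
      have hg0 : g = 0 := by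
        rcases mul_eq_zero.1 hθ with h | h
        · exact h
        · rcases mul_eq_zero.1 h with h | h
          · exact absurd ((C_eq_zero).1 h) hd0
          · exact absurd h hQne
      apply hθ0
      ext1 i
      rw [hg i, hg0]; simp

end generic2
/-- The point `v` lies on the line with coefficients `l`. -/
def Inc (v l : Fin 3 → ℝ) : Prop := l 0 * v 0 + l 1 * v 1 + l 2 * v 2 = 0

lemma inc_iff_det {a b v : Fin 3 → ℝ} (h : NonProp a b) (hv : v ≠ 0) (ha : Inc v a) (hb : Inc v b)
    (l : Fin 3 → ℝ) : Inc v l ↔ det3 a b l = 0 := by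
  unfold Inc at *
  have e01 : v 0 * (a 2 * b 0 - a 0 * b 2) = v 1 * (a 1 * b 2 - a 2 * b 1) := by
    linear_combination (-b 2) * ha + a 2 * hb
  have e02 : v 0 * (a 0 * b 1 - a 1 * b 0) = v 2 * (a 1 * b 2 - a 2 * b 1) := by
    linear_combination b 1 * ha - a 1 * hb
  have e12 : v 1 * (a 0 * b 1 - a 1 * b 0) = v 2 * (a 2 * b 0 - a 0 * b 2) := by
    linear_combination (-b 0) * ha + a 0 * hb
  have key : ∃ s : ℝ, s ≠ 0 ∧ v 0 = s * (a 1 * b 2 - a 2 * b 1) ∧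
      v 1 = s * (a 2 * b 0 - a 0 * b 2) ∧ v 2 = s * (a 0 * b 1 - a 1 * b 0) := by
    have nz : ∀ s : ℝ, v 0 = s * (a 1 * b 2 - a 2 * b 1) →
      v 1 = s * (a 2 * b 0 - a 0 * b 2) → v 2 = s * (a 0 * b 1 - a 1 * b 0) → s ≠ 0 := by
      rintro s h0 h1 h2 rfl
      apply hv
      ext i
      fin_cases i
      · simpa using h0
      · simpa using h1
      · simpa using h2
    rcases h with h | h | h
    · have h0 : v 0 = v 2 / (a 0 * b 1 - a 1 * b 0) * (a 1 * b 2 - a 2 * b 1) := by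
        field_simp; linear_combination e02
      have h1 : v 1 = v 2 / (a 0 * b 1 - a 1 * b 0) * (a 2 * b 0 - a 0 * b 2) := by
        field_simp; linear_combination e12
      have h2 : v 2 = v 2 / (a 0 * b 1 - a 1 * b 0) * (a 0 * b 1 - a 1 * b 0) := by
        field_simp
      exact ⟨_, nz _ h0 h1 h2, h0, h1, h2⟩
    · have h' : a 2 * b 0 - a 0 * b 2 ≠ 0 := by intro h'; apply h; linarith
      have h0 : v 0 = v 1 / (a 2 * b 0 - a 0 * b 2) * (a 1 * b 2 - a 2 * b 1) := by
        field_simp; linear_combination e01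
      have h1 : v 1 = v 1 / (a 2 * b 0 - a 0 * b 2) * (a 2 * b 0 - a 0 * b 2) := by
        field_simp
      have h2 : v 2 = v 1 / (a 2 * b 0 - a 0 * b 2) * (a 0 * b 1 - a 1 * b 0) := by
        field_simp; linear_combination -e12
      exact ⟨_, nz _ h0 h1 h2, h0, h1, h2⟩
    · have h0 : v 0 = v 0 / (a 1 * b 2 - a 2 * b 1) * (a 1 * b 2 - a 2 * b 1) := by
        field_simp
      have h1 : v 1 = v 0 / (a 1 * b 2 - a 2 * b 1) * (a 2 * b 0 - a 0 * b 2) := by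
        field_simp; linear_combination -e01
      have h2 : v 2 = v 0 / (a 1 * b 2 - a 2 * b 1) * (a 0 * b 1 - a 1 * b 0) := by
        field_simp; linear_combination -e02
      exact ⟨_, nz _ h0 h1 h2, h0, h1, h2⟩
  obtain ⟨s, hs, h0, h1, h2⟩ := key
  have : l 0 * v 0 + l 1 * v 1 + l 2 * v 2 = s * det3 a b l := by
    rw [h0, h1, h2]; unfold det3; ring
  rw [this, mul_eq_zero]
  simp [hs]

lemma exists_common {a b : Fin 3 → ℝ} (h : NonProp a b) :
    ∃ v, v ≠ 0 ∧ Inc v a ∧ Inc v b := by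
  refine ⟨![a 1 * b 2 - a 2 * b 1, a 2 * b 0 - a 0 * b 2, a 0 * b 1 - a 1 * b 0], ?_, ?_, ?_⟩
  · intro hz
    have h0 := congrFun hz 0
    have h1 := congrFun hz 1
    have h2 := congrFun hz 2
    simp at h0 h1 h2
    rcases h with h | h | h <;> apply h <;> linarith
  · simp [Inc]; ring
  · simp [Inc]; ring

section generic3

variable {ι : Type} [DecidableEq ι] (c : ι → Fin 3 → ℝ)

/-- The intersection points, as sets of indices. -/
noncomputable def ptsF (T : Finset ι) : Finset (Finset ι) :=
  T.powerset.filter fun S => (∃ v, v ≠ 0 ∧ ∀ L ∈ T, (L ∈ S ↔ Inc v (c L))) ∧ 2 ≤ S.card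

variable {c}

lemma nPoints_arr (hc : ∀ L L', L ≠ L' → NonProp (c L) (c L')) (T : Finset ι) (j : ℕ) :
    nPoints (arr c T) j = ((ptsF c T).filter fun S => S.card = j).card := by
  unfold nPoints
  have hinj := frm_inj hc
  have : {U : Finset (MvPolynomial (Fin 3) ℝ) |
    ∃ v : Fin 3 → ℝ, v ≠ 0 ∧ U = (arr c T).filter (fun α => eval v α = 0) ∧
      2 ≤ U.card ∧ U.card = j} =
      (fun S : Finset ι => S.image fun L => frm (c L)) ''
        (((ptsF c T).filter fun S => S.card = j : Finset (Finset ι)) : Set (Finset ι)) := by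
    ext U
    simp only [Set.mem_ofPred_eq, Set.mem_image, Finset.coe_filter, ptsF, Finset.mem_filter,
      Finset.mem_powerset]
    constructor
    · rintro ⟨v, hv, rfl, h2, hj⟩
      have hU : (T.filter fun L => Inc v (c L)).image (fun L => frm (c L)) =
          (arr c T).filter (fun α => eval v α = 0) := by
        ext p
        simp only [arr, Finset.mem_image, Finset.mem_filter]
        constructor
        · rintro ⟨L, ⟨h1, h2⟩, rfl⟩
          exact ⟨⟨L, h1, rfl⟩, by rw [frm_eval]; exact h2⟩
        · rintro ⟨⟨L, h1, rfl⟩, h2⟩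
          exact ⟨L, ⟨h1, by rw [frm_eval] at h2; exact h2⟩, rfl⟩
      have hcd : (T.filter fun L => Inc v (c L)).card =
          ((arr c T).filter (fun α => eval v α = 0)).card := by
        rw [← hU, Finset.card_image_of_injective _ hinj]
      refine ⟨T.filter fun L => Inc v (c L), ⟨⟨Finset.filter_subset _ _, ⟨v, hv, ?_⟩, ?_⟩, ?_⟩, hU⟩
      · intro L hL; simp [hL]
      · rw [hcd]; exact h2
      · rw [hcd]; exact hj
    · rintro ⟨S, ⟨⟨hST, ⟨v, hv, hS⟩, h2⟩, hj⟩, rfl⟩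
      have hcd : (S.image fun L => frm (c L)).card = S.card :=
        Finset.card_image_of_injective _ hinj
      refine ⟨v, hv, ?_, by rw [hcd]; exact h2, by rw [hcd]; exact hj⟩
      ext p
      simp only [arr, Finset.mem_image, Finset.mem_filter]
      constructor
      · rintro ⟨L, h1, rfl⟩
        exact ⟨⟨L, hST h1, rfl⟩, by rw [frm_eval]; exact (hS L (hST h1)).1 h1⟩
      · rintro ⟨⟨L, h1, rfl⟩, h2⟩
        exact ⟨L, (hS L h1).2 (by rw [frm_eval] at h2; exact h2), rfl⟩
  rw [this, Set.ncard_image_of_injective _ (Finset.image_injective hinj), Set.ncard_coe_finset]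

lemma tjurina_arr (hc : ∀ L L', L ≠ L' → NonProp (c L) (c L')) (T : Finset ι) :
    tjurina (arr c T) = ∑ S ∈ ptsF c T, (S.card - 1) ^ 2 := by
  unfold tjurina
  have hcd : (arr c T).card = T.card := Finset.card_image_of_injective _ (frm_inj hc)
  rw [hcd, ← Finset.sum_fiberwise_of_maps_to (s := ptsF c T) (t := Finset.range (T.card + 1))
    (g := fun S => S.card)]
  · apply Finset.sum_congr rfl
    intro j _
    rw [nPoints_arr hc, Finset.card_eq_sum_ones, Finset.sum_mul]
    apply Finset.sum_congr rfl
    intro S hS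
    rw [(Finset.mem_filter.1 hS).2, one_mul]
  · intro S hS
    have := Finset.card_le_card (Finset.mem_powerset.1 (Finset.mem_filter.1 hS).1)
    rw [Finset.mem_range]; omega

theorem tjurina_insert (hc : ∀ L L', L ≠ L' → NonProp (c L) (c L')) {T : Finset ι} {H : ι}
    (hHT : H ∉ T) {γ : Type} [DecidableEq γ] (π : ι → γ)
    (hπ : ∀ L ∈ T, ∀ L' ∈ T, det3 (c H) (c L) (c L') = 0 ↔ π L = π L') :
    tjurina (arr c (insert H T)) + (T.image π).card = tjurina (arr c T) + 2 * T.card := by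
  rw [tjurina_arr hc, tjurina_arr hc]
  have hHL : ∀ L ∈ T, NonProp (c H) (c L) := fun L hL => hc _ _ (by rintro rfl; exact hHT hL)
  let Q : Finset ι → Prop := fun S => ∃ v, v ≠ 0 ∧ Inc v (c H) ∧ ∀ L ∈ T, (L ∈ S ↔ Inc v (c L))
  let fib : γ → Finset ι := fun y => T.filter fun L => π L = y
  have hfibne : ∀ y ∈ T.image π, (fib y).Nonempty := by
    intro y hy
    obtain ⟨L, hL, rfl⟩ := Finset.mem_image.1 hy
    exact ⟨L, by simp [fib, hL]⟩
  have hfibinj : ∀ y ∈ T.image π, ∀ y' ∈ T.image π, fib y = fib y' → y = y' := by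
    intro y hy y' _ h
    obtain ⟨L, hL⟩ := hfibne y hy
    have h2 := hL
    rw [h] at h2
    rw [← (Finset.mem_filter.1 hL).2, (Finset.mem_filter.1 h2).2]
  have hpt : ∀ v, v ≠ 0 → Inc v (c H) → ∀ L ∈ T, Inc v (c L) → ∀ L' ∈ T,
      (Inc v (c L') ↔ L' ∈ fib (π L)) := by
    intro v hv h1 L hL h2 L' hL'
    rw [inc_iff_det (hHL L hL) hv h1 h2, hπ L hL L' hL']
    simp [fib, hL', eq_comm]
  have hex : ∀ y ∈ T.image π, ∃ v, v ≠ 0 ∧ Inc v (c H) ∧ ∀ L' ∈ T, (L' ∈ fib y ↔ Inc v (c L')) := by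
    intro y hy
    obtain ⟨L, hL, rfl⟩ := Finset.mem_image.1 hy
    obtain ⟨v, hv, h1, h2⟩ := exists_common (hHL L hL)
    exact ⟨v, hv, h1, fun L' hL' => (hpt v hv h1 L hL h2 L' hL').symm⟩
  have hfibH : ∀ y, H ∉ fib y := fun y h => hHT (Finset.mem_filter.1 h).1
  -- points off the line
  have hoff : (ptsF c (insert H T)).filter (fun S => ¬ H ∈ S) = (ptsF c T).filter fun S => ¬ Q S := by
    ext S
    simp only [Finset.mem_filter, ptsF, Finset.mem_powerset]
    constructor
    · rintro ⟨⟨hS, ⟨v, hv, hvS⟩, h2⟩, hHS⟩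
      have hST : S ⊆ T := (Finset.subset_insert_iff_of_notMem hHS).1 hS
      refine ⟨⟨hST, ⟨v, hv, fun L hL => hvS L (Finset.mem_insert_of_mem hL)⟩, h2⟩, ?_⟩
      rintro ⟨w, hw, hwH, hwS⟩
      obtain ⟨L, hL, L', hL', hne⟩ := Finset.one_lt_card.1 h2
      have e1 := inc_iff_det (hc L L' hne) hw ((hwS L (hST hL)).1 hL) ((hwS L' (hST hL')).1 hL') (c H)
      have e2 := inc_iff_det (hc L L' hne) hv ((hvS L (hS hL)).1 hL) ((hvS L' (hS hL')).1 hL') (c H)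
      exact hHS ((hvS H (Finset.mem_insert_self _ _)).2 (e2.2 (e1.1 hwH)))
    · rintro ⟨⟨hS, ⟨v, hv, hvS⟩, h2⟩, hQ⟩
      have hHS : H ∉ S := fun h => hHT (hS h)
      refine ⟨⟨hS.trans (Finset.subset_insert _ _), ⟨v, hv, ?_⟩, h2⟩, hHS⟩
      intro L hL
      rcases Finset.mem_insert.1 hL with rfl | hL
      · exact ⟨fun h => absurd h hHS, fun h => absurd ⟨v, hv, h, hvS⟩ hQ⟩
      · exact hvS L hL
  have hon : (ptsF c (insert H T)).filter (fun S => H ∈ S) =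
      (T.image π).image fun y => insert H (fib y) := by
    ext S
    simp only [Finset.mem_filter, ptsF, Finset.mem_powerset]
    constructor
    · rintro ⟨⟨hS, ⟨v, hv, hvS⟩, h2⟩, hHS⟩
      obtain ⟨L, hL, hne⟩ := Finset.exists_mem_ne h2 H
      have hLT : L ∈ T := (Finset.mem_insert.1 (hS hL)).resolve_left hne
      rw [Finset.mem_image]
      refine ⟨π L, Finset.mem_image_of_mem _ hLT, ?_⟩
      have hp := hpt v hv ((hvS H (Finset.mem_insert_self _ _)).1 hHS) L hLT ((hvS L (hS hL)).1 hL)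
      ext M
      rw [Finset.mem_insert]
      constructor
      · rintro (rfl | hM)
        · exact hHS
        · have hMT := (Finset.mem_filter.1 hM).1
          exact (hvS M (Finset.mem_insert_of_mem hMT)).2 ((hp M hMT).2 hM)
      · intro hM
        rcases Finset.mem_insert.1 (hS hM) with rfl | hMT
        · exact Or.inl rfl
        · exact Or.inr ((hp M hMT).1 ((hvS M (Finset.mem_insert_of_mem hMT)).1 hM))
    · intro hS
      obtain ⟨y, hy, rfl⟩ := Finset.mem_image.1 hS
      obtain ⟨v, hv, hvH, hvf⟩ := hex y hy
      refine ⟨⟨Finset.insert_subset_insert _ (Finset.filter_subset _ _), ⟨v, hv, ?_⟩, ?_⟩,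
        Finset.mem_insert_self _ _⟩
      · intro L hL
        rcases Finset.mem_insert.1 hL with rfl | hL
        · simp [hvH]
        · have hne : L ≠ H := fun h => hHT (h ▸ hL)
          rw [Finset.mem_insert, ← hvf L hL]
          simp [hne]
      · rw [Finset.card_insert_of_notMem (hfibH y)]
        have := (hfibne y hy).card_pos
        omega
  have hon' : (ptsF c T).filter (fun S => Q S) =
      ((T.image π).filter fun y => 2 ≤ (fib y).card).image fib := by
    ext S
    simp only [Finset.mem_filter, ptsF, Finset.mem_powerset]
    constructor
    · rintro ⟨⟨hS, -, h2⟩, v, hv, hvH, hvS⟩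
      obtain ⟨L, hL⟩ := Finset.card_pos.1 (show 0 < S.card by omega)
      have hLT := hS hL
      have hp := hpt v hv hvH L hLT ((hvS L hLT).1 hL)
      have hSe : fib (π L) = S := by
        ext M
        constructor
        · intro hM
          have hMT := (Finset.mem_filter.1 hM).1
          exact (hvS M hMT).2 ((hp M hMT).2 hM)
        · intro hM
          exact (hp M (hS hM)).1 ((hvS M (hS hM)).1 hM)
      rw [Finset.mem_image]
      refine ⟨π L, Finset.mem_filter.2 ⟨Finset.mem_image_of_mem _ hLT, ?_⟩, hSe⟩
      rw [hSe]; exact h2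
    · intro hS
      obtain ⟨y, hy, rfl⟩ := Finset.mem_image.1 hS
      obtain ⟨hy, h2⟩ := Finset.mem_filter.1 hy
      obtain ⟨v, hv, hvH, hvf⟩ := hex y hy
      exact ⟨⟨Finset.filter_subset _ _, ⟨v, hv, hvf⟩, h2⟩, v, hv, hvH, hvf⟩
  rw [← Finset.sum_filter_add_sum_filter_not (ptsF c (insert H T)) (fun S => H ∈ S),
    ← Finset.sum_filter_add_sum_filter_not (ptsF c T) (fun S => Q S), hoff, hon, hon',
    Finset.sum_image (s := T.image π) (g := fun y => insert H (fib y)),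
    Finset.sum_image (s := (T.image π).filter fun y => 2 ≤ (fib y).card) (g := fib)]
  · have e1 : ∑ y ∈ (T.image π).filter (fun y => 2 ≤ (fib y).card), ((fib y).card - 1) ^ 2
        = ∑ y ∈ T.image π, ((fib y).card - 1) ^ 2 := by
      apply Finset.sum_filter_of_ne
      intro y hy h
      by_contra h'
      apply h
      rw [show (fib y).card - 1 = 0 by omega]; rfl
    have e2 : T.card = ∑ y ∈ T.image π, (fib y).card := Finset.card_eq_sum_card_image π T
    have e3 : ∑ y ∈ T.image π, ((insert H (fib y)).card - 1) ^ 2 + (T.image π).card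
        = ∑ y ∈ T.image π, ((fib y).card - 1) ^ 2 + 2 * T.card := by
      rw [e2, Finset.mul_sum, ← Finset.sum_add_distrib, Finset.card_eq_sum_ones,
        ← Finset.sum_add_distrib]
      apply Finset.sum_congr rfl
      intro y hy
      rw [Finset.card_insert_of_notMem (hfibH y)]
      have := (hfibne y hy).card_pos
      obtain ⟨n, hn⟩ : ∃ n, (fib y).card = n + 1 := ⟨_, (Nat.succ_pred_eq_of_pos this).symm⟩
      rw [hn]
      simp only [Nat.add_sub_cancel]
      ring
    rw [e1]
    omega
  · intro y hy y' hy' h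
    exact hfibinj y (Finset.mem_filter.1 hy).1 y' (Finset.mem_filter.1 hy').1 h
  · intro y hy y' hy' h
    apply hfibinj y hy y' hy'
    rw [← Finset.erase_insert (hfibH y), ← Finset.erase_insert (hfibH y')]
    exact congrArg (fun s => s.erase H) h

end generic3
/-- The lines used in the construction: the line at infinity, `x = n`, `y = n`, `x - y = n`
and `x + y = n`. -/
inductive Ln : Type
  | inf : Ln
  | v (n : ℕ) : Ln
  | h (n : ℕ) : Ln
  | d (n : ℕ) : Ln
  | a (n : ℕ) : Ln
  deriving DecidableEq

/-- Integer coefficients of a line. -/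
def cz : Ln → Fin 3 → ℤ
  | .inf => ![0, 0, 1]
  | .v n => ![1, 0, -n]
  | .h n => ![0, 1, -n]
  | .d n => ![1, -1, -n]
  | .a n => ![1, 1, -n]

/-- Real coefficients of a line. -/
def cr (L : Ln) (i : Fin 3) : ℝ := (cz L i : ℝ)

/-- Integer determinant. -/
def det3z (a b c : Fin 3 → ℤ) : ℤ :=
  a 0 * (b 1 * c 2 - b 2 * c 1) - a 1 * (b 0 * c 2 - b 2 * c 0) + a 2 * (b 0 * c 1 - b 1 * c 0)

lemma det3_cr (L M N : Ln) : det3 (cr L) (cr M) (cr N) = 0 ↔ det3z (cz L) (cz M) (cz N) = 0 := by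
  rw [← Int.cast_eq_zero (α := ℝ)]
  simp only [det3, det3z, cr]
  push_cast
  rfl

lemma cr_ne_zero (L : Ln) : cr L ≠ 0 := by
  intro hz
  have h0 := congrFun hz 0
  have h1 := congrFun hz 1
  have h2 := congrFun hz 2
  cases L <;> simp [cr, cz] at h0 h1 h2

lemma cr_nonProp (L M : Ln) (hne : L ≠ M) : NonProp (cr L) (cr M) := by
  have key : cz L 0 * cz M 1 - cz L 1 * cz M 0 ≠ 0 ∨ cz L 0 * cz M 2 - cz L 2 * cz M 0 ≠ 0 ∨
      cz L 1 * cz M 2 - cz L 2 * cz M 1 ≠ 0 := by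
    cases L <;> cases M <;> simp [cz] at hne ⊢ <;> omega
  unfold NonProp cr
  exact_mod_cast key

/-- Offsets of the lines of slope `-1`. -/
def sf (k j : ℕ) : ℕ := if j < k then 3 * k + j else 2 * k + 1 + 2 * j

/-- The set of lines. -/
def TT (k nh nv nd na : ℕ) : Finset Ln :=
  insert Ln.inf ((Finset.range nh).image Ln.h ∪ (Finset.range nv).image Ln.v ∪
    (Finset.range nd).image (fun i => Ln.d (i + 1)) ∪
    (Finset.range na).image (fun j => Ln.a (sf k j)))

lemma inf_mem {k nh nv nd na : ℕ} : Ln.inf ∈ TT k nh nv nd na := by simp [TT]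
lemma h_mem {k nh nv nd na n : ℕ} : Ln.h n ∈ TT k nh nv nd na ↔ n < nh := by simp [TT]
lemma v_mem {k nh nv nd na n : ℕ} : Ln.v n ∈ TT k nh nv nd na ↔ n < nv := by simp [TT]
lemma d_mem {k nh nv nd na n : ℕ} : Ln.d n ∈ TT k nh nv nd na ↔ 1 ≤ n ∧ n ≤ nd := by
  simp only [TT, Finset.mem_insert, Finset.mem_union, Finset.mem_image, Finset.mem_range]
  constructor
  · simp; rintro i hi rfl; omega
  · rintro ⟨h1, h2⟩
    exact Or.inr (Or.inl (Or.inr ⟨n - 1, by omega, by congr 1; omega⟩))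
lemma a_mem {k nh nv nd na n : ℕ} : Ln.a n ∈ TT k nh nv nd na ↔ ∃ j < na, sf k j = n := by
  simp [TT]

lemma TT_h (k nh nv nd na : ℕ) : TT k (nh + 1) nv nd na = insert (Ln.h nh) (TT k nh nv nd na) := by
  ext L
  rw [Finset.mem_insert]
  cases L <;> simp [inf_mem, h_mem, v_mem, d_mem, a_mem]
  omega

lemma TT_v (k nh nv nd na : ℕ) : TT k nh (nv + 1) nd na = insert (Ln.v nv) (TT k nh nv nd na) := by
  ext L
  rw [Finset.mem_insert]
  cases L <;> simp [inf_mem, h_mem, v_mem, d_mem, a_mem]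
  omega

lemma TT_d (k nh nv nd na : ℕ) :
    TT k nh nv (nd + 1) na = insert (Ln.d (nd + 1)) (TT k nh nv nd na) := by
  ext L
  rw [Finset.mem_insert]
  cases L <;> simp [inf_mem, h_mem, v_mem, d_mem, a_mem]
  omega

lemma TT_a (k nh nv nd na : ℕ) :
    TT k nh nv nd (na + 1) = insert (Ln.a (sf k na)) (TT k nh nv nd na) := by
  ext L
  rw [Finset.mem_insert]
  cases L <;> simp [inf_mem, h_mem, v_mem, d_mem, a_mem]
  constructor
  · rintro ⟨j, hj, rfl⟩
    by_cases h : j = na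
    · subst h; exact Or.inl rfl
    · exact Or.inr ⟨j, by omega, rfl⟩
  · rintro (rfl | ⟨j, hj, rfl⟩)
    · exact ⟨na, by omega, rfl⟩
    · exact ⟨j, by omega, rfl⟩

lemma a_notMem (k nh nv nd na : ℕ) : Ln.a (sf k na) ∉ TT k nh nv nd na := by
  rw [a_mem]
  rintro ⟨j, hj, h⟩
  unfold sf at h
  split_ifs at h <;> omega

lemma TT_card (k nh nv nd na : ℕ) : (TT k nh nv nd na).card = 1 + nh + nv + nd + na := by
  induction na with
  | succ n ih => rw [TT_a, Finset.card_insert_of_notMem (a_notMem _ _ _ _ _), ih]; ring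
  | zero =>
    induction nd with
    | succ n ih => rw [TT_d, Finset.card_insert_of_notMem (by rw [d_mem]; omega), ih]; ring
    | zero =>
      induction nv with
      | succ n ih => rw [TT_v, Finset.card_insert_of_notMem (by rw [v_mem]; omega), ih]; ring
      | zero =>
        induction nh with
        | succ n ih => rw [TT_h, Finset.card_insert_of_notMem (by rw [h_mem]; omega), ih]; ring
        | zero => simp [TT]

/-- Intersection coordinate on a horizontal line. -/
def piH : Ln → Option ℤ
  | .v n => some n
  | _ => none

/-- Intersection coordinate on a vertical line. -/
def piV : Ln → Option ℤ
  | .h n => some n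
  | _ => none

/-- Intersection coordinate on the line `x - y = i`. -/
def piD (i : ℕ) : Ln → Option ℤ
  | .v n => some n
  | .h n => some (n + i)
  | _ => none

/-- Intersection coordinate on the line `x + y = s`. -/
def piA (s : ℕ) : Ln → Option ℤ
  | .v n => some (2 * n)
  | .h n => some (2 * (s - n))
  | .d n => some (s + n)
  | _ => none

lemma piH_det {k nh nv m : ℕ} (hm : Ln.h m ∉ TT k nh nv 0 0) :
    ∀ L ∈ TT k nh nv 0 0, ∀ L' ∈ TT k nh nv 0 0,
    det3 (cr (.h m)) (cr L) (cr L') = 0 ↔ piH L = piH L' := by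
  intro L hL L' hL'
  rw [det3_cr]
  have g1 : L ≠ .h m := fun h => hm (h ▸ hL)
  have g2 : L' ≠ .h m := fun h => hm (h ▸ hL')
  have e1 : ∀ n, Ln.a n ≠ L := by rintro n rfl; simp [a_mem] at hL
  have e2 : ∀ n, Ln.a n ≠ L' := by rintro n rfl; simp [a_mem] at hL'
  have e3 : ∀ n, Ln.d n ≠ L := by rintro n rfl; rw [d_mem] at hL; omega
  have e4 : ∀ n, Ln.d n ≠ L' := by rintro n rfl; rw [d_mem] at hL'; omega
  clear hL hL' hm
  cases L <;> cases L' <;> simp [det3z, cz, piH] at * <;> omega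

lemma piV_det {k nh nv m : ℕ} (hm : Ln.v m ∉ TT k nh nv 0 0) :
    ∀ L ∈ TT k nh nv 0 0, ∀ L' ∈ TT k nh nv 0 0,
    det3 (cr (.v m)) (cr L) (cr L') = 0 ↔ piV L = piV L' := by
  intro L hL L' hL'
  rw [det3_cr]
  have g1 : L ≠ .v m := fun h => hm (h ▸ hL)
  have g2 : L' ≠ .v m := fun h => hm (h ▸ hL')
  have e1 : ∀ n, Ln.a n ≠ L := by rintro n rfl; simp [a_mem] at hL
  have e2 : ∀ n, Ln.a n ≠ L' := by rintro n rfl; simp [a_mem] at hL'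
  have e3 : ∀ n, Ln.d n ≠ L := by rintro n rfl; rw [d_mem] at hL; omega
  have e4 : ∀ n, Ln.d n ≠ L' := by rintro n rfl; rw [d_mem] at hL'; omega
  clear hL hL' hm
  cases L <;> cases L' <;> simp [det3z, cz, piV] at * <;> omega

lemma piD_det {k nh nv nd m : ℕ} (hm : Ln.d m ∉ TT k nh nv nd 0) :
    ∀ L ∈ TT k nh nv nd 0, ∀ L' ∈ TT k nh nv nd 0,
    det3 (cr (.d m)) (cr L) (cr L') = 0 ↔ piD m L = piD m L' := by
  intro L hL L' hL'
  rw [det3_cr]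
  have g1 : L ≠ .d m := fun h => hm (h ▸ hL)
  have g2 : L' ≠ .d m := fun h => hm (h ▸ hL')
  have e1 : ∀ n, Ln.a n ≠ L := by rintro n rfl; simp [a_mem] at hL
  have e2 : ∀ n, Ln.a n ≠ L' := by rintro n rfl; simp [a_mem] at hL'
  clear hL hL' hm
  cases L <;> cases L' <;> simp [det3z, cz, piD] at * <;> omega

lemma piA_det {k nh nv nd na m : ℕ} (hm : Ln.a m ∉ TT k nh nv nd na) :
    ∀ L ∈ TT k nh nv nd na, ∀ L' ∈ TT k nh nv nd na,
    det3 (cr (.a m)) (cr L) (cr L') = 0 ↔ piA m L = piA m L' := by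
  intro L hL L' hL'
  rw [det3_cr]
  have g1 : L ≠ .a m := fun h => hm (h ▸ hL)
  have g2 : L' ≠ .a m := fun h => hm (h ▸ hL')
  clear hL hL' hm
  cases L <;> cases L' <;> simp [det3z, cz, piA] at * <;> omega

lemma image_card (T : Finset Ln) (π : Ln → Option ℤ) (E : Finset ℤ) (hinf : Ln.inf ∈ T)
    (hi : π Ln.inf = none) (h1 : ∀ L ∈ T, ∀ x, π L = some x → x ∈ E)
    (h2 : ∀ x ∈ E, ∃ L ∈ T, π L = some x) : (T.image π).card = E.card + 1 := by
  have : T.image π = Finset.insertNone E := by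
    ext y
    rw [Finset.mem_image]
    cases y with
    | none => simp; exact ⟨_, hinf, hi⟩
    | some x =>
      simp only [Finset.some_mem_insertNone]
      constructor
      · rintro ⟨L, hL, h⟩; exact h1 L hL x h
      · intro hx; exact h2 x hx
  rw [this, Finset.card_insertNone]
lemma tau_step {T : Finset Ln} {H : Ln} (hH : H ∉ T) (π : Ln → Option ℤ)
    (hπ : ∀ L ∈ T, ∀ L' ∈ T, det3 (cr H) (cr L) (cr L') = 0 ↔ π L = π L') (m : ℕ)
    (hm : (T.image π).card = m) :
    tjurina (arr cr (insert H T)) + m = tjurina (arr cr T) + 2 * T.card := by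
  rw [← hm]
  exact tjurina_insert cr_nonProp hH π hπ

lemma low_step {T : Finset Ln} {H : Ln} (hH : H ∉ T) (π : Ln → Option ℤ)
    (hπ : ∀ L ∈ T, ∀ L' ∈ T, det3 (cr H) (cr L) (cr L') = 0 ↔ π L = π L') (m r : ℕ)
    (hm : (T.image π).card = m) (hx : cr H 0 = 1) (hr : 1 ≤ r) (hrm : r + 2 ≤ m)
    (hlow : LowTriv cr T r) : LowTriv cr (insert H T) (r + 1) := by
  refine LowTriv.add cr hlow hr hx (fun L hL => cr_nonProp _ _ ?_) π
    (fun L hL L' hL' h => (hπ L hL L' hL').1 h) (by omega)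
  rintro rfl
  exact hH hL

lemma card_H (k nh nv : ℕ) : ((TT k nh nv 0 0).image piH).card = nv + 1 := by
  rw [image_card _ _ ((Finset.range nv).image (fun n : ℕ => (n : ℤ))) inf_mem rfl]
  · rw [Finset.card_image_of_injective _ Nat.cast_injective, Finset.card_range]
  · intro L hL x hx
    cases L <;> simp [piH] at hx
    rw [v_mem] at hL
    simp; exact ⟨_, hL, hx⟩
  · intro x hx
    simp at hx
    obtain ⟨n, hn, rfl⟩ := hx
    exact ⟨.v n, v_mem.2 hn, rfl⟩

lemma card_V (k nh nv : ℕ) : ((TT k nh nv 0 0).image piV).card = nh + 1 := by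
  rw [image_card _ _ ((Finset.range nh).image (fun n : ℕ => (n : ℤ))) inf_mem rfl]
  · rw [Finset.card_image_of_injective _ Nat.cast_injective, Finset.card_range]
  · intro L hL x hx
    cases L <;> simp [piV] at hx
    rw [h_mem] at hL
    simp; exact ⟨_, hL, hx⟩
  · intro x hx
    simp at hx
    obtain ⟨n, hn, rfl⟩ := hx
    exact ⟨.h n, h_mem.2 hn, rfl⟩

lemma card_D (k j : ℕ) (hj : j < 2 * k) :
    ((TT k (2 * k) (2 * k) j 0).image (piD (j + 1))).card = 2 * k + j + 2 := by
  rw [image_card _ _ (Finset.Icc (0 : ℤ) (2 * k + j)) inf_mem rfl]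
  · rw [Int.card_Icc]; omega
  · intro L hL x hx
    rw [Finset.mem_Icc]
    cases L <;> simp [piD] at hx
    · rw [v_mem] at hL; omega
    · rw [h_mem] at hL; omega
  · intro x hx
    rw [Finset.mem_Icc] at hx
    by_cases h : x < 2 * k
    · refine ⟨.v x.toNat, v_mem.2 (by omega), ?_⟩
      simp [piD]; omega
    · refine ⟨.h (x - (j + 1)).toNat, h_mem.2 (by omega), ?_⟩
      simp [piD]; omega

lemma card_A1 (k j : ℕ) (hj : j < k) :
    ((TT k (2 * k) (2 * k) (2 * k) j).image (piA (3 * k + j))).card = 4 * k + j + 2 := by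
  rw [image_card _ _ ((Finset.range (3 * k + j + 1)).image (fun t : ℕ => 2 * (t : ℤ)) ∪
    (Finset.range k).image
      (fun p : ℕ => ((3 * k + j + 1 + (3 * k + j) % 2 + 2 * p : ℕ) : ℤ))) inf_mem rfl]
  · rw [Finset.card_union_of_disjoint, Finset.card_image_of_injective,
      Finset.card_image_of_injective, Finset.card_range, Finset.card_range]
    · omega
    · intro a b h; simp only at h; omega
    · intro a b h; simp only at h; omega
    · rw [Finset.disjoint_left]
      intro x hx hx'
      simp only [Finset.mem_image, Finset.mem_range] at hx hx'
      obtain ⟨t, ht, rfl⟩ := hx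
      obtain ⟨p, hp, h⟩ := hx'
      omega
  · intro L hL x hx
    simp only [Finset.mem_union, Finset.mem_image, Finset.mem_range]
    cases L with
    | inf => simp [piA] at hx
    | a n => simp [piA] at hx
    | v n =>
      simp [piA] at hx
      rw [v_mem] at hL
      exact Or.inl ⟨n, by omega, by omega⟩
    | h n =>
      simp [piA] at hx
      rw [h_mem] at hL
      exact Or.inl ⟨3 * k + j - n, by omega, by omega⟩
    | d n =>
      simp [piA] at hx
      rw [d_mem] at hL
      by_cases hp : (3 * k + j + n) % 2 = 0
      · by_cases hq : 3 * k + j + n ≤ 2 * (3 * k + j)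
        · exact Or.inl ⟨(3 * k + j + n) / 2, by omega, by omega⟩
        · omega
      · exact Or.inr ⟨(n - 1) / 2, by omega, by omega⟩
  · intro x hx
    simp only [Finset.mem_union, Finset.mem_image, Finset.mem_range] at hx
    rcases hx with ⟨t, ht, rfl⟩ | ⟨p, hp, rfl⟩
    · by_cases h1 : t < 2 * k
      · exact ⟨.v t, v_mem.2 h1, rfl⟩
      · by_cases h2 : 3 * k + j < t + 2 * k
        · refine ⟨.h (3 * k + j - t), h_mem.2 (by omega), ?_⟩
          simp [piA]; omega
        · refine ⟨.d (2 * t - (3 * k + j)), d_mem.2 (by omega), ?_⟩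
          simp [piA]; omega
    · refine ⟨.d (1 + (3 * k + j) % 2 + 2 * p), d_mem.2 (by omega), ?_⟩
      simp [piA]; omega

lemma card_A2 (k q : ℕ) (hj : q < k) :
    ((TT k (2 * k) (2 * k) (2 * k) (k + q)).image (piA (4 * k + 1 + 2 * q))).card
      = 4 * k + (k + q) + 2 := by
  rw [image_card _ _ (((Finset.range (2 * k)).image (fun t : ℕ => 2 * (t : ℤ)) ∪
    (Finset.range (2 * k)).image (fun t : ℕ => 2 * ((2 * k + 2 + 2 * q + t : ℕ) : ℤ))) ∪
    ((Finset.range (q + 1)).image (fun p : ℕ => 2 * ((2 * k + q + p + 1 : ℕ) : ℤ)) ∪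
    (Finset.range k).image (fun p : ℕ => ((4 * k + 1 + 2 * q + 2 * p + 2 : ℕ) : ℤ))))
    inf_mem rfl]
  · rw [Finset.card_union_of_disjoint, Finset.card_union_of_disjoint,
      Finset.card_union_of_disjoint, Finset.card_image_of_injective,
      Finset.card_image_of_injective, Finset.card_image_of_injective,
      Finset.card_image_of_injective, Finset.card_range, Finset.card_range, Finset.card_range]
    · omega
    · intro a b h; simp only at h; omega
    · intro a b h; simp only at h; omega
    · intro a b h; simp only at h; omega
    · intro a b h; simp only at h; omega
    · rw [Finset.disjoint_left]
      intro x hx hx'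
      simp only [Finset.mem_image, Finset.mem_range] at hx hx'
      obtain ⟨t, ht, rfl⟩ := hx
      obtain ⟨p, hp, h⟩ := hx'
      omega
    · rw [Finset.disjoint_left]
      intro x hx hx'
      simp only [Finset.mem_image, Finset.mem_range] at hx hx'
      obtain ⟨t, ht, rfl⟩ := hx
      obtain ⟨p, hp, h⟩ := hx'
      omega
    · rw [Finset.disjoint_left]
      intro x hx hx'
      simp only [Finset.mem_image, Finset.mem_range, Finset.mem_union] at hx hx'
      rcases hx with ⟨t, ht, rfl⟩ | ⟨t, ht, rfl⟩ <;>
      rcases hx' with ⟨p, hp, h⟩ | ⟨p, hp, h⟩ <;> omega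
  · intro L hL x hx
    simp only [Finset.mem_union, Finset.mem_image, Finset.mem_range]
    cases L with
    | inf => simp [piA] at hx
    | a n => simp [piA] at hx
    | v n =>
      simp [piA] at hx
      rw [v_mem] at hL
      exact Or.inl (Or.inl ⟨n, by omega, by omega⟩)
    | h n =>
      simp [piA] at hx
      rw [h_mem] at hL
      exact Or.inl (Or.inr ⟨2 * k - 1 - n, by omega, by omega⟩)
    | d n =>
      simp [piA] at hx
      rw [d_mem] at hL
      by_cases hp : n % 2 = 0
      · exact Or.inr (Or.inr ⟨n / 2 - 1, by omega, by omega⟩)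
      · by_cases hq : n / 2 ≤ q
        · exact Or.inr (Or.inl ⟨n / 2, by omega, by omega⟩)
        · exact Or.inl (Or.inr ⟨n / 2 - q - 1, by omega, by omega⟩)
  · intro x hx
    simp only [Finset.mem_union, Finset.mem_image, Finset.mem_range] at hx
    rcases hx with (⟨t, ht, rfl⟩ | ⟨t, ht, rfl⟩) | (⟨p, hp, rfl⟩ | ⟨p, hp, rfl⟩)
    · exact ⟨.v t, v_mem.2 ht, rfl⟩
    · refine ⟨.h (2 * k - 1 - t), h_mem.2 (by omega), ?_⟩
      simp [piA]; omega
    · refine ⟨.d (2 * p + 1), d_mem.2 (by omega), ?_⟩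
      simp [piA]; omega
    · refine ⟨.d (2 * p + 2), d_mem.2 (by omega), ?_⟩
      simp [piA]; omega

lemma card_A (k j : ℕ) (hj : j < 2 * k) :
    ((TT k (2 * k) (2 * k) (2 * k) j).image (piA (sf k j))).card = 4 * k + j + 2 := by
  by_cases h : j < k
  · rw [sf, if_pos h]; exact card_A1 k j h
  · obtain ⟨q, rfl⟩ := Nat.exists_eq_add_of_le (not_lt.1 h)
    rw [sf, if_neg h, show 2 * k + 1 + 2 * (k + q) = 4 * k + 1 + 2 * q by ring]
    exact card_A2 k q (by omega)

lemma tau_inf (k : ℕ) : tjurina (arr cr (TT k 0 0 0 0)) = 0 := by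
  rw [tjurina_arr cr_nonProp]
  apply Finset.sum_eq_zero
  intro S hS
  have hsub : S ⊆ TT k 0 0 0 0 := by
    simp only [ptsF, Finset.mem_filter, Finset.mem_powerset] at hS
    exact hS.1
  have := Finset.card_le_card hsub
  rw [TT_card] at this
  rw [Nat.sub_eq_zero_of_le (by omega)]
  rfl

lemma tau_grid (k n : ℕ) : tjurina (arr cr (TT k n n 0 0)) = 3 * n ^ 2 := by
  induction n with
  | zero => exact tau_inf k
  | succ n ih =>
    have n1 : Ln.h n ∉ TT k n n 0 0 := by rw [h_mem]; omega
    have n2 : Ln.v n ∉ TT k (n + 1) n 0 0 := by rw [v_mem]; omega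
    have e1 := tau_step n1 piH (piH_det n1) _ (card_H k n n)
    have e2 := tau_step n2 piV (piV_det n2) _ (card_V k (n + 1) n)
    rw [← TT_h, TT_card] at e1
    rw [← TT_v, TT_card] at e2
    nlinarith

lemma low_base (k : ℕ) : LowTriv cr (TT k 1 1 0 0) 1 := by
  intro θ hdeg hdiv
  have hC : ∀ i, ∃ t, θ i = C t := fun i =>
    ⟨_, totalDegree_eq_zero_iff_eq_C.1 (Nat.lt_one_iff.1 (hdeg i))⟩
  choose t ht using hC
  have ev : ∀ L ∈ TT k 1 1 0 0, cr L 0 * t 0 + cr L 1 * t 1 + cr L 2 * t 2 = 0 := by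
    intro L hL
    obtain ⟨g, hg⟩ := hdiv L hL
    have := congrArg (eval (0 : Fin 3 → ℝ)) hg
    rw [map_mul, frm_eval] at this
    simpa [derv, ht] using this
  have h0 := ev (.v 0) (v_mem.2 (by omega))
  have h1 := ev (.h 0) (h_mem.2 (by omega))
  have h2 := ev .inf inf_mem
  simp [cr, cz] at h0 h1 h2
  refine ⟨0, fun i => ?_⟩
  rw [ht, zero_mul]
  fin_cases i <;> simp [h0, h1, h2]

lemma low_grid (k n : ℕ) : LowTriv cr (TT k (n + 1) (n + 1) 0 0) (n + 1) := by
  induction n with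
  | zero => exact low_base k
  | succ n ih =>
    have n2 : Ln.v (n + 1) ∉ TT k (n + 1 + 1) (n + 1) 0 0 := by rw [v_mem]; omega
    have e0 : LowTriv cr (TT k (n + 1 + 1) (n + 1) 0 0) (n + 1) := by
      refine ih.mono cr ?_
      rw [TT_h k (n + 1)]
      exact Finset.subset_insert _ _
    have e2 := low_step n2 piV (piV_det n2) _ _ (card_V k (n + 1 + 1) (n + 1))
      (by simp [cr, cz]) (by omega) (by omega) e0
    rwa [← TT_v] at e2

lemma diag_all (k : ℕ) (hk : 1 ≤ k) (c : ℕ) (hc : c ≤ 2 * k) :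
    LowTriv cr (TT k (2 * k) (2 * k) c 0) (2 * k + c) ∧
    2 * tjurina (arr cr (TT k (2 * k) (2 * k) c 0)) + c = 24 * k ^ 2 + 12 * k * c + c ^ 2 := by
  induction c with
  | zero =>
    constructor
    · have := low_grid k (2 * k - 1)
      rwa [Nat.sub_add_cancel (by omega)] at this
    · rw [tau_grid]; ring
  | succ j ih =>
    obtain ⟨i1, i2⟩ := ih (by omega)
    have nm : Ln.d (j + 1) ∉ TT k (2 * k) (2 * k) j 0 := by rw [d_mem]; omega
    have e1 := tau_step nm _ (piD_det nm) _ (card_D k j (by omega))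
    have e2 := low_step nm _ (piD_det nm) _ _ (card_D k j (by omega))
      (by simp [cr, cz]) (by omega) le_rfl i1
    rw [← TT_d] at e1 e2
    rw [TT_card] at e1
    exact ⟨e2, by nlinarith⟩

lemma anti_all (k : ℕ) (hk : 1 ≤ k) (c : ℕ) (hc : c ≤ 2 * k) :
    LowTriv cr (TT k (2 * k) (2 * k) (2 * k) c) (2 * k + (2 * k + c)) ∧
    2 * tjurina (arr cr (TT k (2 * k) (2 * k) (2 * k) c)) + (2 * k + c)
      = 24 * k ^ 2 + 12 * k * (2 * k + c) + (2 * k + c) ^ 2 := by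
  induction c with
  | zero => exact diag_all k hk (2 * k) le_rfl
  | succ j ih =>
    obtain ⟨i1, i2⟩ := ih (by omega)
    have nm := a_notMem k (2 * k) (2 * k) (2 * k) j
    have e1 := tau_step nm _ (piA_det nm) _ (card_A k j (by omega))
    have e2 := low_step nm _ (piA_det nm) _ _ (card_A k j (by omega))
      (by simp [cr, cz]) (by omega) (by omega) i1
    rw [← TT_a] at e1 e2
    rw [TT_card] at e1
    exact ⟨e2, by nlinarith⟩

lemma isArr (T : Finset Ln) : IsArrangement (arr cr T) := by
  constructor
  · intro α hα
    obtain ⟨L, _, rfl⟩ := Finset.mem_image.1 hα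
    exact ⟨frm_ne_zero _ (cr_ne_zero L), frm_hom _⟩
  · intro α hα β hβ hne s hs
    obtain ⟨L, _, rfl⟩ := Finset.mem_image.1 hα
    obtain ⟨M, _, rfl⟩ := Finset.mem_image.1 hβ
    have hLM : L ≠ M := by rintro rfl; exact hne rfl
    apply frm_not_dvd (cr_nonProp L M hLM)
    rw [hs, smul_eq_C_mul]
    exact dvd_mul_left _ _

lemma isEss (T : Finset Ln) (h0 : Ln.v 0 ∈ T) (h1 : Ln.h 0 ∈ T) (h2 : Ln.inf ∈ T) :
    IsEssential (arr cr T) := by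
  intro v hv
  have e0 := hv _ (Finset.mem_image_of_mem _ h0)
  have e1 := hv _ (Finset.mem_image_of_mem _ h1)
  have e2 := hv _ (Finset.mem_image_of_mem _ h2)
  simp [frm_eval, cr, cz] at e0 e1 e2
  funext i
  fin_cases i <;> simp [e0, e1, e2]

lemma finish (k c nd na : ℕ) (hk : 1 ≤ k) (hc1 : 1 ≤ c) (hc : nd + na = c)
    (hlow : LowTriv cr (TT k (2 * k) (2 * k) nd na) (2 * k + c))
    (htau : 2 * tjurina (arr cr (TT k (2 * k) (2 * k) nd na)) + c
      = 24 * k ^ 2 + 12 * k * c + c ^ 2) :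
    ∃ A : Finset (MvPolynomial (Fin 3) ℝ),
      IsArrangement A ∧ IsEssential A ∧ IsMaxTjurina A (4 * k + 1 + c) (2 * k + c) := by
  refine ⟨arr cr (TT k (2 * k) (2 * k) nd na), isArr _,
    isEss _ (v_mem.2 (by omega)) (h_mem.2 (by omega)) inf_mem, ?_, ?_, ?_⟩
  · rw [arr, Finset.card_image_of_injective _ (frm_inj cr_nonProp), TT_card]; omega
  · refine mdr_arr cr_nonProp cr_ne_zero _ (TT k 0 (2 * k) 0 0) _ (by omega) hlow ?_ ?_ ?_
    · intro L hL
      cases L with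
      | inf => exact inf_mem
      | v n => rw [v_mem] at hL ⊢; exact hL
      | h n => rw [h_mem] at hL; omega
      | d n => rw [d_mem] at hL; omega
      | a n => simp [a_mem] at hL
    · intro L hL
      cases L with
      | inf => simp [cr, cz]
      | v n => simp [cr, cz]
      | h n => rw [h_mem] at hL; omega
      | d n => rw [d_mem] at hL; omega
      | a n => simp [a_mem] at hL
    · rw [TT_card, TT_card]; omega
  · unfold tauMax
    rw [show 4 * k + 1 + c - 1 = 4 * k + c by omega,
      show 4 * k + 1 + c - (2 * k + c) - 1 = 2 * k by omega,
      show 2 * (2 * k + c) - (4 * k + 1 + c) + 2 = c + 1 by omega]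
    have h2 : 2 * Nat.choose (c + 1) 2 = (c + 1) * c := by
      rw [Nat.choose_two_right, Nat.add_sub_cancel]
      exact Nat.mul_div_cancel' (Nat.even_mul_succ_self c |>.two_dvd.trans (by rw [mul_comm]))
    apply Nat.eq_sub_of_add_eq
    nlinarith

/-- For every pair of integers `(d, r)` with `d ≥ 4`, `d − r` odd, and
`d/2 ≤ r ≤ 3(d−1)/4` (i.e. `2r ≥ d` and `4r ≤ 3(d−1)`), there exists a line
arrangement `A` of `d` lines in the real projective plane which is maximal Tjurina of
type `(d, r)`. -/
theorem exists_maxTjurina_odd_diff_real (d r : ℕ) (hd : 4 ≤ d)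
    (hodd : Odd (d - r)) (h1 : d ≤ 2 * r) (h2 : 4 * r ≤ 3 * (d - 1)) :
    ∃ A : Finset (MvPolynomial (Fin 3) ℝ),
      IsArrangement A ∧ IsEssential A ∧ IsMaxTjurina A d r := by
  obtain ⟨k, hk⟩ := hodd
  have hk1 : 1 ≤ k := by omega
  obtain ⟨c, rfl⟩ : ∃ c, r = 2 * k + c := ⟨r - 2 * k, by omega⟩
  obtain rfl : d = 4 * k + 1 + c := by omega
  by_cases h : c ≤ 2 * k
  · obtain ⟨a1, a2⟩ := diag_all k hk1 c h
    exact finish k c c 0 hk1 (by omega) rfl a1 a2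
  · obtain ⟨q, rfl⟩ := Nat.exists_eq_add_of_le (le_of_lt (not_le.1 h))
    obtain ⟨a1, a2⟩ := anti_all k hk1 q (by omega)
    exact finish k _ (2 * k) q hk1 (by omega) rfl a1 a2
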